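/- For an equivalence n-simplex {C_k}, the augmented chain complex 0 → ℂ[C_n] →^{D_n} ℂ[C_{n−1}] → ⋯ → ℂ[C_1] →^{D_1} ℂ[C_0] →^{D_0} ℂ → 0 is exact: D_0 is surjective, ker D_k = im D_{k+1} for every 0 ≤ k ≤ n−1, and D_n is injective. Equivalently, all homology groups of this complex vanish. -/

import Mathlib

open Finset
open scoped Classical

/-- Strictly increasing `m`-tuples with values in `[n] = {0, 1, …, n}`.
The set `A_k` of the equivalence `n`-simplex corresponds to `Chain n (k+1)`. -/
def Chain (n m : ℕ) : Type :=
  {c : Fin m → Fin (n + 1) // StrictMono c}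

/-- The `ℓ`-th face map: delete the `ℓ`-th coordinate of a tuple. -/
def face {n m : ℕ} (ℓ : Fin (m + 1)) (c : Chain n (m + 1)) : Chain n m :=
  ⟨c.1 ∘ ℓ.succAbove, c.2.comp (Fin.strictMono_succAbove ℓ)⟩

/-- The predicate `B`: some two adjacent coordinates are related by `r`. -/
def hasAdj {n : ℕ} (r : Fin (n + 1) → Fin (n + 1) → Prop) {m : ℕ} (c : Chain n m) : Prop :=
  ∃ i j : Fin m, (i : ℕ) + 1 = (j : ℕ) ∧ r (c.1 i) (c.1 j)

/-- The componentwise relation `≈` on tuples. -/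
def cApprox {n : ℕ} (r : Fin (n + 1) → Fin (n + 1) → Prop) {m : ℕ}
    (c c' : Chain n m) : Prop :=
  ∀ i, r (c.1 i) (c'.1 i)

/-- `C_k`: the quotient of `A_k ∖ B_k` by the componentwise relation `≈`. -/
def CSet (n : ℕ) (r : Fin (n + 1) → Fin (n + 1) → Prop) (k : ℕ) : Type :=
  Quot (fun c c' : {c : Chain n (k + 1) // ¬ hasAdj r c} => cApprox r c.1 c'.1)

/-- The class `[c] ∈ C_k` of a tuple `c ∈ A_k ∖ B_k`. -/
def cls {n : ℕ} (r : Fin (n + 1) → Fin (n + 1) → Prop) {k : ℕ} (c : Chain n (k + 1))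
    (hc : ¬ hasAdj r c) : CSet n r k :=
  Quot.mk _ (⟨c, hc⟩ : {c : Chain n (k + 1) // ¬ hasAdj r c})

/-- `D` is the family of differentials, `D k` being the statement's
`D_{k+1} : ℂ[C_{k+1}] → ℂ[C_k]`, given on basis elements `[c]` by
`D_{k+1}([c]) = ∑_{ℓ ∈ F(c)} (−1)^ℓ [d_ℓ(c)]`. -/
def IsD (n : ℕ) (r : Fin (n + 1) → Fin (n + 1) → Prop)
    (D : ∀ k : ℕ, ((CSet n r (k + 1)) →₀ ℂ) →ₗ[ℂ] ((CSet n r k) →₀ ℂ)) : Prop :=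
  ∀ (k : ℕ) (c : Chain n (k + 2)) (hc : ¬ hasAdj r c),
    D k (Finsupp.single (cls r c hc) 1) =
      ∑ ℓ : Fin (k + 2),
        if h : ¬ hasAdj r (face ℓ c) then
          ((-1 : ℂ) ^ (ℓ : ℕ)) • Finsupp.single (cls r (face ℓ c) h) 1
        else 0

/-- `D0` is the augmentation `D_0 : ℂ[C_0] → ℂ`, sending each basis element to `1`. -/
def IsD0 (n : ℕ) (r : Fin (n + 1) → Fin (n + 1) → Prop)
    (D0 : ((CSet n r 0) →₀ ℂ) →ₗ[ℂ] ℂ) : Prop :=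
  ∀ q : CSet n r 0, D0 (Finsupp.single q 1) = 1

/-!
The complex is contracted by prepending the vertex `0`, as for a full simplex seen as the cone over
the face opposite to its first vertex. Read a tuple in `B` as the element `0` of the complex. Then
the alternating sum of *all* faces computes the differential on every tuple, including those in `B`:
if the entries at positions `p` and `p + 1` are related, the two faces deleting one of them are
`≈`-equivalent and cancel, and every other face still lies in `B`. Prepending `0` is compatible with
`≈`, because it turns a tuple whose first entry is related to `0` into a tuple in `B`, and a tuple
that starts with `0` itself is sent to `0`. With the empty tuple spanning degree `-1`, the
augmentation is one more differential and needs no separate argument.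
-/

theorem ker_eq_range_of_contraction {R A B C : Type*} [Semiring R] [AddCommMonoid A]
    [AddCommMonoid B] [AddCommMonoid C] [Module R A] [Module R B] [Module R C] {g : A →ₗ[R] B}
    {f : B →ₗ[R] C} {s : B →ₗ[R] A} {t : C →ₗ[R] B} (hfg : f ∘ₗ g = 0)
    (hst : g ∘ₗ s + t ∘ₗ f = LinearMap.id) : LinearMap.ker f = LinearMap.range g := by
  refine le_antisymm (fun x hx => ⟨s x, ?_⟩) (LinearMap.range_le_ker_iff.2 hfg)
  simpa [LinearMap.mem_ker.1 hx] using LinearMap.congr_fun hst x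

section Tuples

variable {n m : ℕ} {r : Fin (n + 1) → Fin (n + 1) → Prop}

theorem hasAdj_iff_castSucc_succ {c : Chain n (m + 1)} :
    hasAdj r c ↔ ∃ p : Fin m, r (c.1 p.castSucc) (c.1 p.succ) := by
  refine ⟨?_, fun ⟨p, hp⟩ => ⟨p.castSucc, p.succ, by simp, hp⟩⟩
  rintro ⟨i, j, hij, h⟩
  obtain ⟨p, rfl⟩ := Fin.exists_castSucc_eq.2 (show i ≠ Fin.last m by grind)
  obtain rfl : p.succ = j := Fin.ext hij
  exact ⟨p, h⟩

theorem cApprox.symm (hr : Equivalence r) {c c' : Chain n m} (h : cApprox r c c') :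
    cApprox r c' c :=
  fun i => hr.symm (h i)

theorem hasAdj.of_cApprox (hr : Equivalence r) {c c' : Chain n m} (hc : hasAdj r c)
    (h : cApprox r c c') : hasAdj r c' := by
  obtain ⟨i, j, hij, hrel⟩ := hc
  exact ⟨i, j, hij, hr.trans (hr.symm (h i)) (hr.trans hrel (h j))⟩

theorem cApprox.face {c c' : Chain n (m + 1)} (h : cApprox r c c') (l : Fin (m + 1)) :
    cApprox r (face l c) (face l c') :=
  fun i => h (l.succAbove i)

theorem cApprox_face_castSucc_face_succ (hr : Equivalence r) {c : Chain n (m + 1)} {p : Fin m}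
    (h : r (c.1 p.castSucc) (c.1 p.succ)) : cApprox r (face p.castSucc c) (face p.succ c) := by
  intro q
  change r (c.1 (p.castSucc.succAbove q)) (c.1 (p.succ.succAbove q))
  rcases lt_trichotomy q p with hq | rfl | hq
  · rw [Fin.succAbove_castSucc_of_lt _ _ hq, Fin.succAbove_succ_of_le _ _ hq.le]
    exact hr.refl _
  · rw [Fin.succAbove_castSucc_self, Fin.succAbove_succ_self]
    exact hr.symm h
  · rw [Fin.succAbove_castSucc_of_le _ _ hq.le, Fin.succAbove_succ_of_lt _ _ hq]
    exact hr.refl _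

theorem hasAdj_face {c : Chain n (m + 1)} {p : Fin m} (h : r (c.1 p.castSucc) (c.1 p.succ))
    {l : Fin (m + 1)} (hl : l ≠ p.castSucc) (hl' : l ≠ p.succ) : hasAdj r (face l c) := by
  obtain ⟨i, hi⟩ := Fin.exists_succAbove_eq hl.symm
  obtain ⟨j, hj⟩ := Fin.exists_succAbove_eq hl'.symm
  refine ⟨i, j, by grind [Fin.succAbove], ?_⟩
  change r (c.1 (l.succAbove i)) (c.1 (l.succAbove j))
  rwa [hi, hj]

theorem face_predAbove_face_succAbove (c : Chain n (m + 2)) (i : Fin (m + 2)) (j : Fin (m + 1)) :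
    face (j.predAbove i) (face (i.succAbove j) c) = face j (face i c) :=
  Subtype.ext <| funext fun p => congrArg c.1 <|
    Fin.succAbove_succAbove_succAbove_predAbove i j p

/-- The tuple `(0, c₀, …, c_{m-1})`, for a tuple `c` with positive entries. -/
def consZero (c : Chain n m) (hc : ∀ i, 0 < c.1 i) : Chain n (m + 1) :=
  ⟨Fin.cons 0 c.1, by
    intro i j hij
    cases i using Fin.cases <;> cases j using Fin.cases <;> simp_all [c.2.lt_iff_lt]⟩

theorem face_zero_consZero (c : Chain n m) (hc : ∀ i, 0 < c.1 i) : face 0 (consZero c hc) = c :=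
  rfl

theorem face_succ_consZero (c : Chain n (m + 1)) (hc : ∀ i, 0 < c.1 i) (l : Fin (m + 1)) :
    face l.succ (consZero c hc) = consZero (face l c) fun i => hc (l.succAbove i) := by
  refine Subtype.ext (funext fun p => ?_)
  cases p using Fin.cases <;> simp [face, consZero, Fin.removeNth_apply]

theorem pos_face_zero (c : Chain n (m + 1)) (i : Fin m) : 0 < (face 0 c).1 i :=
  (Fin.zero_le _).trans_lt (c.2 (Fin.succ_pos i))

theorem consZero_face_zero {c : Chain n (m + 1)} (hc : c.1 0 = 0) :
    consZero (face 0 c) (pos_face_zero c) = c := by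
  refine Subtype.ext (funext fun p => ?_)
  cases p using Fin.cases with
  | zero => exact hc.symm
  | succ p => rfl

theorem Chain.forall_pos_iff {c : Chain n (m + 1)} : (∀ i, 0 < c.1 i) ↔ c.1 0 ≠ 0 :=
  ⟨fun hc => (hc 0).ne', fun hc i =>
    (Fin.pos_iff_ne_zero.2 hc).trans_le (c.2.monotone (Fin.zero_le i))⟩

theorem hasAdj_consZero {c : Chain n m} (hc : ∀ i, 0 < c.1 i) (h : hasAdj r c) :
    hasAdj r (consZero c hc) := by
  obtain ⟨i, j, hij, hrel⟩ := h
  exact ⟨i.succ, j.succ, by simpa using hij, hrel⟩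

theorem cApprox.consZero (hr : Equivalence r) {c c' : Chain n m} (h : cApprox r c c')
    (hc : ∀ i, 0 < c.1 i) (hc' : ∀ i, 0 < c'.1 i) :
    cApprox r (consZero c hc) (consZero c' hc') := by
  intro p
  cases p using Fin.cases with
  | zero => exact hr.refl _
  | succ p => exact h p

end Tuples

section Generators

variable {n m : ℕ} {r : Fin (n + 1) → Fin (n + 1) → Prop} (R : Type*) [Semiring R]

/-- The quotient of the `m`-tuples without related adjacent entries by `≈`. This is `C_{m-1}`,
including the one-point set `C_{-1}` of the augmentation: `CSet n r k` unfolds to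
`ChainClass r (k + 1)`. -/
def ChainClass (r : Fin (n + 1) → Fin (n + 1) → Prop) (m : ℕ) : Type :=
  Quot fun c c' : {c : Chain n m // ¬ hasAdj r c} => cApprox r c.1 c'.1

/-- The class of an `m`-tuple, corresponding to `cls` in positive length. -/
def ChainClass.mk (c : Chain n m) (hc : ¬ hasAdj r c) : ChainClass r m :=
  Quot.mk _ ⟨c, hc⟩

/-- The generator of `R[C_{m-1}]` given by an `m`-tuple, with the convention that a tuple with
related adjacent entries gives `0`. -/
noncomputable def chainGen (r : Fin (n + 1) → Fin (n + 1) → Prop) (c : Chain n m) :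
    ChainClass r m →₀ R :=
  if h : ¬ hasAdj r c then Finsupp.single (ChainClass.mk c h) 1 else 0

theorem chainGen_of_not_hasAdj {c : Chain n m} (h : ¬ hasAdj r c) :
    chainGen R r c = Finsupp.single (ChainClass.mk c h) 1 :=
  dif_pos h

theorem chainGen_of_hasAdj {c : Chain n m} (h : hasAdj r c) : chainGen R r c = 0 :=
  dif_neg (not_not.2 h)

theorem chainGen_congr (hr : Equivalence r) {c c' : Chain n m} (h : cApprox r c c') :
    chainGen R r c = chainGen R r c' := by
  by_cases hc : hasAdj r c
  · rw [chainGen_of_hasAdj R hc, chainGen_of_hasAdj R (hc.of_cApprox hr h)]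
  · have hc' : ¬ hasAdj r c' := fun hc' => hc (hc'.of_cApprox hr (h.symm hr))
    rw [chainGen_of_not_hasAdj R hc, chainGen_of_not_hasAdj R hc']
    exact congrArg (Finsupp.single · 1) (Quot.sound h)

variable {R} {M : Type*} [AddCommMonoid M] [Module R M]

theorem linearMap_ext_chainGen {f g : (ChainClass r m →₀ R) →ₗ[R] M}
    (h : ∀ c, ¬ hasAdj r c → f (chainGen R r c) = g (chainGen R r c)) : f = g := by
  refine Finsupp.lhom_ext' fun q => LinearMap.ext_ring ?_
  obtain ⟨c, hc⟩ := q
  simpa only [chainGen_of_not_hasAdj R hc] using! h c hc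

/-- The linear map on `R[C_{m-1}]` induced by an `≈`-invariant function of `m`-tuples. -/
noncomputable def chainLift (f : Chain n m → M) (hf : ∀ c c', cApprox r c c' → f c = f c') :
    (ChainClass r m →₀ R) →ₗ[R] M :=
  Finsupp.linearCombination R
    (Quot.lift (fun c => f c.1) fun c c' h => hf c.1 c'.1 h : ChainClass r m → M)

theorem chainLift_chainGen {f : Chain n m → M} (hf : ∀ c c', cApprox r c c' → f c = f c')
    (hf₀ : ∀ c, hasAdj r c → f c = 0) (c : Chain n m) :
    chainLift f hf (chainGen R r c) = f c := by
  by_cases hc : hasAdj r c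
  · rw [chainGen_of_hasAdj R hc, map_zero, hf₀ c hc]
  · rw [chainGen_of_not_hasAdj R hc]
    exact (Finsupp.linearCombination_single R 1 (ChainClass.mk c hc)).trans (one_smul R (f c))

end Generators

section Cone

variable {n m : ℕ} {r : Fin (n + 1) → Fin (n + 1) → Prop} (R : Type*) [Semiring R]

/-- The value of the contracting homotopy on a tuple: `0` is prepended to the tuple, unless it is
its first entry already, in which case the value is `0`. -/
noncomputable def coneGen (r : Fin (n + 1) → Fin (n + 1) → Prop) (c : Chain n m) :
    ChainClass r (m + 1) →₀ R :=
  if hc : ∀ i, 0 < c.1 i then chainGen R r (consZero c hc) else 0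

theorem coneGen_of_pos {c : Chain n m} (hc : ∀ i, 0 < c.1 i) :
    coneGen R r c = chainGen R r (consZero c hc) :=
  dif_pos hc

theorem coneGen_of_eq_zero {c : Chain n m} {i : Fin m} (hc : c.1 i = 0) : coneGen R r c = 0 :=
  dif_neg fun h => (h i).ne' hc

theorem coneGen_of_rel_zero {c : Chain n (m + 1)} (h : r 0 (c.1 0)) : coneGen R r c = 0 := by
  by_cases hc : c.1 0 = 0
  · exact coneGen_of_eq_zero R hc
  · rw [coneGen_of_pos R (Chain.forall_pos_iff.2 hc)]
    exact chainGen_of_hasAdj R (hasAdj_iff_castSucc_succ.2 ⟨0, h⟩)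

theorem coneGen_of_hasAdj (c : Chain n m) (h : hasAdj r c) : coneGen R r c = 0 := by
  unfold coneGen
  split_ifs with hc
  · exact chainGen_of_hasAdj R (hasAdj_consZero hc h)
  · rfl

theorem coneGen_congr (hr : Equivalence r) (c c' : Chain n m) (h : cApprox r c c') :
    coneGen R r c = coneGen R r c' := by
  have coneGen_congr_of_pos (hc : ∀ i, 0 < c.1 i) (hc' : ∀ i, 0 < c'.1 i) :
      coneGen R r c = coneGen R r c' := by
    rw [coneGen_of_pos R hc, coneGen_of_pos R hc', chainGen_congr R hr (h.consZero hr hc hc')]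
  cases m with
  | zero => exact coneGen_congr_of_pos finZeroElim finZeroElim
  | succ m =>
    by_cases h₀ : r 0 (c.1 0)
    · rw [coneGen_of_rel_zero R h₀, coneGen_of_rel_zero R (hr.trans h₀ (h 0))]
    · exact coneGen_congr_of_pos (Chain.forall_pos_iff.2 fun e => h₀ (e ▸ hr.refl _))
        (Chain.forall_pos_iff.2 fun e => h₀ (e ▸ hr.symm (h 0)))

/-- The contracting homotopy `R[C_{m-1}] → R[C_m]` of the augmented complex, which prepends `0`. -/
noncomputable def cone (hr : Equivalence r) (m : ℕ) :
    (ChainClass r m →₀ R) →ₗ[R] (ChainClass r (m + 1) →₀ R) :=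
  chainLift (coneGen R r) (coneGen_congr R hr)

theorem cone_chainGen (hr : Equivalence r) (c : Chain n m) :
    cone R hr m (chainGen R r c) = coneGen R r c :=
  chainLift_chainGen _ (coneGen_of_hasAdj R) c

end Cone

section Complex

variable {n m : ℕ} {r : Fin (n + 1) → Fin (n + 1) → Prop} (R : Type*) [Ring R]

theorem sum_face_congr (hr : Equivalence r) (c c' : Chain n (m + 1)) (h : cApprox r c c') :
    ∑ l : Fin (m + 1), (-1 : R) ^ (l : ℕ) • chainGen R r (face l c) =
      ∑ l : Fin (m + 1), (-1 : R) ^ (l : ℕ) • chainGen R r (face l c') :=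
  Finset.sum_congr rfl fun l _ => by rw [chainGen_congr R hr (h.face l)]

theorem sum_face_eq_zero_of_hasAdj (hr : Equivalence r) (c : Chain n (m + 1)) (h : hasAdj r c) :
    ∑ l : Fin (m + 1), (-1 : R) ^ (l : ℕ) • chainGen R r (face l c) = 0 := by
  obtain ⟨p, hp⟩ := hasAdj_iff_castSucc_succ.1 h
  rw [Fintype.sum_eq_add p.castSucc p.succ p.castSucc_lt_succ.ne]
  · rw [chainGen_congr R hr (cApprox_face_castSucc_face_succ hr hp)]
    simp [pow_succ]
  · rintro l ⟨hl, hl'⟩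
    rw [chainGen_of_hasAdj R (hasAdj_face hp hl hl'), smul_zero]

/-- The differential `R[C_m] → R[C_{m-1}]` of the augmented complex, as a map from classes of
`(m + 1)`-tuples to classes of `m`-tuples. -/
noncomputable def boundary (hr : Equivalence r) (m : ℕ) :
    (ChainClass r (m + 1) →₀ R) →ₗ[R] (ChainClass r m →₀ R) :=
  chainLift (fun c => ∑ l : Fin (m + 1), (-1 : R) ^ (l : ℕ) • chainGen R r (face l c))
    (sum_face_congr R hr)

theorem boundary_chainGen (hr : Equivalence r) (c : Chain n (m + 1)) :
    boundary R hr m (chainGen R r c) =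
      ∑ l : Fin (m + 1), (-1 : R) ^ (l : ℕ) • chainGen R r (face l c) :=
  chainLift_chainGen _ (sum_face_eq_zero_of_hasAdj R hr) c

theorem sum_sum_face_face_eq_zero {M : Type*} [AddCommGroup M] [Module R M] (g : Chain n m → M)
    (c : Chain n (m + 2)) :
    ∑ i : Fin (m + 2), ∑ j : Fin (m + 1),
      (-1 : R) ^ (i : ℕ) • (-1 : R) ^ (j : ℕ) • g (face j (face i c)) = 0 := by
  rw [← Fintype.sum_prod_type']
  refine Finset.sum_involution (fun p _ => (p.1.succAbove p.2, p.2.predAbove p.1)) ?_ ?_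
    (fun _ _ => Finset.mem_univ _) ?_
  · rintro ⟨i, j⟩ -
    have sign_flip : (-1 : R) ^ (i.succAbove j : ℕ) * (-1) ^ (j.predAbove i : ℕ) =
        -((-1) ^ (i : ℕ) * (-1) ^ (j : ℕ)) := by
      rw [← pow_add, ← pow_add, Fin.neg_one_pow_succAbove_add_predAbove]
    simp only [face_predAbove_face_succAbove, smul_smul, sign_flip, neg_smul, add_neg_cancel]
  · rintro ⟨i, j⟩ - - h
    exact Fin.succAbove_ne i j (congrArg Prod.fst h)
  · rintro ⟨i, j⟩ -
    exact Prod.ext (Fin.succAbove_succAbove_predAbove i j) (Fin.predAbove_predAbove_succAbove i j)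

theorem boundary_comp_boundary (hr : Equivalence r) (m : ℕ) :
    boundary R hr m ∘ₗ boundary R hr (m + 1) = 0 := by
  refine linearMap_ext_chainGen fun c _ => ?_
  simp only [LinearMap.comp_apply, boundary_chainGen, map_sum, map_smul, Finset.smul_sum,
    LinearMap.zero_apply]
  exact sum_sum_face_face_eq_zero R (chainGen R r) c

theorem boundary_comp_cone_zero (hr : Equivalence r) :
    boundary R hr 0 ∘ₗ cone R hr 0 = LinearMap.id := by
  refine linearMap_ext_chainGen fun c _ => ?_
  simp [cone_chainGen, coneGen_of_pos R (c := c) finZeroElim, boundary_chainGen,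
    face_zero_consZero]

theorem boundary_comp_cone_add_cone_comp_boundary (hr : Equivalence r) (m : ℕ) :
    boundary R hr (m + 1) ∘ₗ cone R hr (m + 1) + cone R hr m ∘ₗ boundary R hr m =
      LinearMap.id := by
  refine linearMap_ext_chainGen fun c _ => ?_
  simp only [LinearMap.add_apply, LinearMap.comp_apply, LinearMap.id_apply, cone_chainGen,
    boundary_chainGen R hr c, map_sum, map_smul]
  by_cases hc : c.1 0 = 0
  · have cone_face_succ (l : Fin m) : coneGen R r (face l.succ c) = 0 := by
      obtain ⟨i, hi⟩ := Fin.exists_succAbove_eq (Fin.succ_ne_zero l).symm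
      exact coneGen_of_eq_zero R (i := i) ((congrArg c.1 hi).trans hc)
    rw [coneGen_of_eq_zero R hc, Fin.sum_univ_succ, coneGen_of_pos R (pos_face_zero c),
      consZero_face_zero hc]
    simp [cone_face_succ]
  · have hpos := Chain.forall_pos_iff.2 hc
    have cone_face (l : Fin (m + 1)) :
        coneGen R r (face l c) = chainGen R r (face l.succ (consZero c hpos)) := by
      rw [face_succ_consZero, coneGen_of_pos R fun i => hpos (l.succAbove i)]
    rw [coneGen_of_pos R hpos, boundary_chainGen, Fin.sum_univ_succ, face_zero_consZero]
    simp [cone_face, pow_succ]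

theorem boundary_zero_surjective (hr : Equivalence r) :
    Function.Surjective (boundary R hr 0) :=
  fun x => ⟨cone R hr 0 x, LinearMap.congr_fun (boundary_comp_cone_zero R hr) x⟩

theorem ker_boundary_eq_range (hr : Equivalence r) (m : ℕ) :
    LinearMap.ker (boundary R hr m) = LinearMap.range (boundary R hr (m + 1)) :=
  ker_eq_range_of_contraction (boundary_comp_boundary R hr m)
    (boundary_comp_cone_add_cone_comp_boundary R hr m)

theorem isEmpty_chain (h : n + 1 < m) : IsEmpty (Chain n m) :=
  ⟨fun c => h.not_ge (by simpa using Fintype.card_le_of_injective _ c.2.injective)⟩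

theorem boundary_injective (hr : Equivalence r) (h : n ≤ m) :
    Function.Injective (boundary R hr m) := by
  have : IsEmpty (ChainClass r (m + 2)) :=
    ⟨Quot.ind fun c => (isEmpty_chain (by omega)).false c.1⟩
  rw [← LinearMap.ker_eq_bot, ker_boundary_eq_range, LinearMap.range_eq_bot]
  exact Subsingleton.elim _ _

end Complex

section Augmentation

variable {n : ℕ} {r : Fin (n + 1) → Fin (n + 1) → Prop}

theorem not_hasAdj_of_length_le_one {m : ℕ} (hm : m ≤ 1) (c : Chain n m) : ¬ hasAdj r c := by
  rintro ⟨i, j, hij, -⟩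
  omega

theorem chainGen_of_length_le_one (R : Type*) [Semiring R] {m : ℕ} (hm : m ≤ 1) (c : Chain n m) :
    chainGen R r c = Finsupp.single (ChainClass.mk c (not_hasAdj_of_length_le_one hm c)) 1 :=
  chainGen_of_not_hasAdj R _

instance : Subsingleton (ChainClass r 0) :=
  ⟨by
    rintro ⟨c⟩ ⟨c'⟩
    exact congrArg _ (Subtype.ext (Subtype.ext (Subsingleton.elim c.1.1 c'.1.1)))⟩

/-- The class of the empty tuple, the only point of `C_{-1}`. -/
def emptyClass (r : Fin (n + 1) → Fin (n + 1) → Prop) : ChainClass r 0 :=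
  ChainClass.mk ⟨finZeroElim, Subsingleton.strictMono _⟩ (not_hasAdj_of_length_le_one zero_le_one _)

/-- The augmentation `D_0`, over an arbitrary coefficient ring. -/
noncomputable def augmentation (R : Type*) [Semiring R] (r : Fin (n + 1) → Fin (n + 1) → Prop) :
    (ChainClass r 1 →₀ R) →ₗ[R] R :=
  Finsupp.linearCombination R fun _ => 1

theorem augmentation_single (R : Type*) [Semiring R] (q : ChainClass r 1) :
    augmentation R r (Finsupp.single q 1) = 1 := by
  simp [augmentation]

theorem augmentation_eq (R : Type*) [Ring R] (hr : Equivalence r) :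
    augmentation R r =
      (Finsupp.uniqueLinearEquiv R R (emptyClass r)).toLinearMap ∘ₗ boundary R hr 0 := by
  refine linearMap_ext_chainGen fun c _ => ?_
  rw [LinearMap.comp_apply, boundary_chainGen]
  simp [augmentation_single, chainGen_of_length_le_one, Subsingleton.elim _ (emptyClass r)]

theorem IsD.eq_boundary (hr : Equivalence r)
    {D : ∀ k : ℕ, (CSet n r (k + 1) →₀ ℂ) →ₗ[ℂ] (CSet n r k →₀ ℂ)} (hD : IsD n r D) :
    D = fun k => boundary ℂ hr (k + 1) := by
  refine funext fun k => linearMap_ext_chainGen fun c hc => ?_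
  have D_chainGen : D k (chainGen ℂ r c) =
      ∑ l : Fin (k + 2), (-1 : ℂ) ^ (l : ℕ) • chainGen ℂ r (face l c) := by
    rw [chainGen_of_not_hasAdj ℂ hc]
    refine (hD k c hc).trans (Finset.sum_congr rfl fun l _ => ?_)
    rw [chainGen, smul_dite, smul_zero]
    rfl
  exact D_chainGen.trans (boundary_chainGen ℂ hr c).symm

theorem IsD0.eq_augmentation {D0 : (CSet n r 0 →₀ ℂ) →ₗ[ℂ] ℂ} (hD0 : IsD0 n r D0) :
    D0 = augmentation ℂ r := by
  refine Finsupp.lhom_ext' fun q => LinearMap.ext_ring ?_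
  exact (hD0 q).trans (augmentation_single ℂ q).symm

theorem stmt8_general {n : ℕ} {r : Fin (n + 1) → Fin (n + 1) → Prop} (R : Type*) [Ring R]
    (hr : Equivalence r) :
    Function.Surjective (augmentation R r) ∧
    LinearMap.ker (augmentation R r) = LinearMap.range (boundary R hr 1) ∧
    (∀ k, LinearMap.ker (boundary R hr (k + 1)) = LinearMap.range (boundary R hr (k + 2))) ∧
    (∀ k, n ≤ k + 1 → Function.Injective (boundary R hr (k + 1))) ∧
    (n = 0 → Function.Injective (augmentation R r)) := by
  have hiso := (Finsupp.uniqueLinearEquiv R R (emptyClass r)).bijective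
  rw [augmentation_eq R hr, LinearEquiv.ker_comp]
  exact ⟨hiso.surjective.comp (boundary_zero_surjective R hr), ker_boundary_eq_range R hr 0,
    fun k => ker_boundary_eq_range R hr (k + 1), fun k => boundary_injective R hr,
    fun hn => hiso.injective.comp (boundary_injective R hr hn.le)⟩

end Augmentation

/-- Exactness of the augmented chain complex of an equivalence `n`-simplex:
`D_0` is surjective, `ker D_k = im D_{k+1}` for `0 ≤ k ≤ n - 1` (the case `k = 0` stated
separately, and `k = j + 1` for `1 ≤ k ≤ n - 1`), and `D_n` is injective. -/
theorem stmt8 (n : ℕ) (r : Fin (n + 1) → Fin (n + 1) → Prop) (hr : Equivalence r)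
    (hadj : ∀ i j : Fin (n + 1), r i j → (i : ℕ) ≠ (j : ℕ) + 1 ∧ (j : ℕ) ≠ (i : ℕ) + 1)
    (D : ∀ k : ℕ, ((CSet n r (k + 1)) →₀ ℂ) →ₗ[ℂ] ((CSet n r k) →₀ ℂ))
    (hD : IsD n r D)
    (D0 : ((CSet n r 0) →₀ ℂ) →ₗ[ℂ] ℂ) (hD0 : IsD0 n r D0) :
    Function.Surjective ⇑D0 ∧
    (1 ≤ n → LinearMap.ker D0 = LinearMap.range (D 0)) ∧
    (∀ j : ℕ, j + 2 ≤ n → LinearMap.ker (D j) = LinearMap.range (D (j + 1))) ∧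
    (1 ≤ n → Function.Injective ⇑(D (n - 1))) ∧
    (n = 0 → Function.Injective ⇑D0) := by
  obtain ⟨hsurj, hker₀, hker, hinj, hinj₀⟩ := stmt8_general ℂ hr
  rw [hD.eq_boundary hr, hD0.eq_augmentation]
  exact ⟨hsurj, fun _ => hker₀, fun j _ => hker j, fun _ => hinj (n - 1) (by omega), hinj₀⟩
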